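/- Let F be a field of characteristic zero, τ : F → F a ring homomorphism, k := F^τ its fixed field, K a subfield of F with τ(K) ⊆ K and k ⊆ K, and ∂ : F → F a derivation with ∂ ∘ τ = τ ∘ ∂ and ∂(K) ⊆ K. Let a ∈ K be nonzero and let z ∈ F be a nonzero element with τ(z) = a z. Then the following are equivalent: (1) there exist n ≥ 0, λ₀, …, λₙ ∈ k, not all zero, and g ∈ K such that λ₀(∂(a)/a) + λ₁∂(∂(a)/a) + ⋯ + λₙ∂ⁿ(∂(a)/a) = τ(g) − g; (2) there exist n ≥ 0 and λ₀, …, λₙ ∈ k, not all zero, such that λ₀(∂(z)/z) + λ₁∂(∂(z)/z) + ⋯ + λₙ∂ⁿ(∂(z)/z) ∈ K; (3) ∂(z)/z is D-finite over K; (4) z is differentially algebraic over K. -/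

import Mathlib

set_option synthInstance.maxHeartbeats 400000
set_option maxHeartbeats 1000000

/-!
Put `y = ∂z/z` and `b = ∂a/a`. Then `τ(∂ⁱy) = ∂ⁱy + ∂ⁱb`, so a combination `w = ∑ λᵢ ∂ⁱy` with
`λᵢ ∈ k` satisfies `τ w - w = ∑ λᵢ ∂ⁱb`, and it differs from `g ∈ K` by an element of `k` exactly
when `τ g - g` has the same value; thus `w ∈ K` iff `∑ λᵢ ∂ⁱb = τ g - g` for some `g ∈ K`. Moreover
`z` is differentially algebraic iff `y` is, because in characteristic zero this means lying in a
finitely generated `∂`-stable extension of `K`.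

It remains to extract a linear relation from an algebraic one. The polynomial relations among the
`∂ⁱy` are stable under `P ↦ P^τ(X + (∂ⁱb)ᵢ)`, which preserves the leading term of a monic `P`; hence
a monic relation of minimal degree is fixed. Partial derivatives of fixed polynomials are fixed, so
differentiating down to degree one yields a fixed `∑ λᵢ Xᵢ - g`, which says that `λᵢ ∈ k` and
`∑ λᵢ ∂ⁱb = τ g - g`.
-/

open scoped Differential

section AffineShift

open MvPolynomial MonomialOrder

section CommSemiring

variable {ι R : Type*} [CommSemiring R] (σ : R →+* R) (b : ι → R)

/-- The ring endomorphism `P ↦ P^σ(X + b)` of `R[X]`, applying `σ` to the coefficients of `P` and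
translating the variables by `b`. If `τ` extends `σ` and `τ (y i) = y i + b i`, it lifts the action
of `τ` on `R[y]` to polynomials. -/
noncomputable def affineShift : MvPolynomial ι R →+* MvPolynomial ι R :=
  eval₂Hom (C.comp σ) fun i => X i + C (b i)

theorem affineShift_C (c : R) : affineShift σ b (C c) = C (σ c) := by
  simp [affineShift]

theorem affineShift_X (i : ι) : affineShift σ b (X i) = X i + C (b i) := by
  simp [affineShift]

theorem affineShift_monomial (u : ι →₀ ℕ) (c : R) :
    affineShift σ b (monomial u c) = C (σ c) * u.prod fun i n => (X i + C (b i)) ^ n := by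
  simp [affineShift, eval₂_monomial]

theorem aeval_affineShift {A : Type*} [CommSemiring A] [Algebra R A] {σ : R →+* R} {b : ι → R}
    {τ : A →+* A} (hσ : ∀ c, τ (algebraMap R A c) = algebraMap R A (σ c))
    {y : ι → A} (hy : ∀ i, τ (y i) = y i + algebraMap R A (b i)) (P : MvPolynomial ι R) :
    aeval y (affineShift σ b P) = τ (aeval y P) := by
  have : (aeval y : MvPolynomial ι R →ₐ[R] A).toRingHom.comp (affineShift σ b) =
      τ.comp (aeval y : MvPolynomial ι R →ₐ[R] A).toRingHom := by
    refine ringHom_ext (fun c => ?_) fun i => ?_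
    · simp [affineShift_C, hσ]
    · simp [affineShift_X, hy]
  exact RingHom.congr_fun this P

theorem pderiv_affineShift (i : ι) (P : MvPolynomial ι R) :
    pderiv i (affineShift σ b P) = affineShift σ b (pderiv i P) := by
  classical
  induction P using MvPolynomial.induction_on with
  | C c => simp [affineShift_C]
  | add P Q hP hQ => simp only [map_add, hP, hQ]
  | mul_X P j hP =>
    have hX : pderiv i (affineShift σ b (X j)) = affineShift σ b (pderiv i (X j)) := by
      rw [affineShift_X, map_add, pderiv_C, add_zero, pderiv_X, Pi.single_apply]
      split_ifs <;> simp
    simp only [map_mul, pderiv_mul, map_add, hP, hX]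

theorem totalDegree_pderiv_lt {P : MvPolynomial ι R} (hP : P.totalDegree ≠ 0) (i : ι) :
    (pderiv i P).totalDegree < P.totalDegree := by
  rw [totalDegree, Finset.sup_lt_iff (Nat.pos_of_ne_zero hP)]
  intro u hu
  rw [mem_support_iff, coeff_pderiv] at hu
  have hle := le_totalDegree (mem_support_iff.2 (left_ne_zero_of_mul hu))
  rw [Finsupp.sum_add_index' (by simp) (by simp), Finsupp.sum_single_index rfl] at hle
  lia

end CommSemiring

theorem eq_of_pderiv_eq {ι R : Type*} [CommRing R] [IsAddTorsionFree R] {P Q : MvPolynomial ι R}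
    (hD : ∀ i, pderiv i P = pderiv i Q) (h0 : constantCoeff P = constantCoeff Q) : P = Q := by
  refine coe_injective ι R (MvPowerSeries.pderiv.ext (fun i => ?_) ?_)
  · rw [MvPowerSeries.pderiv_coe, hD, MvPowerSeries.pderiv_coe]
  · simpa only [← MvPowerSeries.coeff_zero_eq_constantCoeff_apply, coeff_coe,
      ← constantCoeff_eq] using h0

theorem eq_sum_C_mul_X_add_C_of_pderiv_eq_C {ι R : Type*} [CommRing R] [IsAddTorsionFree R]
    [Fintype ι] {P : MvPolynomial ι R} {c : ι → R} (hc : ∀ i, pderiv i P = C (c i)) :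
    P = ∑ i, C (c i) * X i + C (constantCoeff P) := by
  classical
  refine eq_of_pderiv_eq (fun i => ?_) (by simp)
  simp [hc, pderiv_X, Pi.single_apply]

section Leading

variable {ι R : Type*} [CommRing R] (m : MonomialOrder ι) (σ : R →+* R) (b : ι → R)

theorem monic_prod_X_add_C_pow (u : ι →₀ ℕ) :
    m.Monic (u.prod fun i n => (X i + C (b i)) ^ n) :=
  Monic.prod fun i _ => (m.monic_X_add_C i (b i)).pow

theorem degree_prod_X_add_C_pow [Nontrivial R] (u : ι →₀ ℕ) :
    m.degree (u.prod fun i n => (X i + C (b i)) ^ n) = u := by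
  have hpow (i : ι) (n : ℕ) : m.degree ((X i + C (b i)) ^ n) = Finsupp.single i n := by
    rw [degree_pow_of_pow_leadingCoeff_ne_zero, degree_X_add_C, Finsupp.smul_single', mul_one]
    simp [(m.monic_X_add_C i (b i)).leadingCoeff_eq_one]
  rw [Finsupp.prod, degree_prod_of_regular]
  · simp only [hpow]
    exact u.sum_single
  · intro i _
    rw [((m.monic_X_add_C i (b i)).pow).leadingCoeff_eq_one]
    exact isRegular_one

theorem coeff_affineShift_of_degree_le {P : MvPolynomial ι R} {d : ι →₀ ℕ}
    (hd : m.degree P ≼[m] d) : (affineShift σ b P).coeff d = σ (P.coeff d) := by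
  classical
  nontriviality R
  have hmonomial {u : ι →₀ ℕ} (hu : u ∈ P.support) (c : R) :
      (affineShift σ b (monomial u c)).coeff d = if u = d then σ c else 0 := by
    rw [affineShift_monomial, coeff_C_mul]
    split_ifs with hud
    · have hmonic := (monic_prod_X_add_C_pow m b u).coeff_degree
      rw [degree_prod_X_add_C_pow] at hmonic
      rw [← hud, hmonic, mul_one]
    · have hlt : m.degree (u.prod fun i n => (X i + C (b i)) ^ n) ≺[m] d := by
        rw [degree_prod_X_add_C_pow]
        exact ((m.le_degree hu).trans hd).lt_of_ne (m.toSyn.injective.ne hud)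
      rw [coeff_eq_zero_of_lt hlt, mul_zero]
  conv_lhs => rw [P.as_sum, map_sum, coeff_sum]
  rw [Finset.sum_congr rfl fun u hu => hmonomial hu (P.coeff u), Finset.sum_ite_eq']
  split_ifs with hdP
  · rfl
  · rw [notMem_support_iff.1 hdP, map_zero]

end Leading

section Field

variable {ι K : Type*} [Field K] {σ : K →+* K} {b : ι → K}

theorem exists_monic_mem_degree_le (m : MonomialOrder ι) {I : Ideal (MvPolynomial ι K)}
    (hI : I ≠ ⊥) : ∃ Q ∈ I, m.Monic Q ∧ ∀ P ∈ I, P ≠ 0 → m.degree Q ≼[m] m.degree P := by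
  obtain ⟨P, ⟨hPI, hP0⟩, hPmin⟩ := exists_minimalFor_of_wellFoundedLT
    (fun P => P ∈ I ∧ P ≠ 0) (fun P => m.toSyn (m.degree P)) ((Submodule.ne_bot_iff I).1 hI)
  have hlead : m.leadingCoeff P ≠ 0 := m.leadingCoeff_ne_zero_iff.2 hP0
  have hdeg : m.degree (C (m.leadingCoeff P)⁻¹ * P) = m.degree P := by
    rw [degree_mul (C_ne_zero.2 (inv_ne_zero hlead)) hP0, degree_C, zero_add]
  refine ⟨C (m.leadingCoeff P)⁻¹ * P, I.mul_mem_left _ hPI, ?_, fun Q hQI hQ0 => ?_⟩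
  · rw [Monic, leadingCoeff_mul, leadingCoeff_C, inv_mul_cancel₀ hlead]
  · rw [hdeg]
    exact (le_total _ _).elim id (hPmin ⟨hQI, hQ0⟩)

theorem exists_affineShift_eq_self (m : MonomialOrder ι) {I : Ideal (MvPolynomial ι K)}
    (hI : I ≠ ⊥) (hIb : ∀ P ∈ I, affineShift σ b P ∈ I) :
    ∃ P ∈ I, P ≠ 0 ∧ affineShift σ b P = P := by
  obtain ⟨P, hPI, hmonic, hPmin⟩ := exists_monic_mem_degree_le m hI
  refine ⟨P, hPI, hmonic.ne_zero, ?_⟩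
  by_contra hne
  set R := affineShift σ b P - P with hR
  have hR0 : R ≠ 0 := sub_ne_zero.2 hne
  have hle : m.degree P ≼[m] m.degree R := hPmin R (I.sub_mem (hIb P hPI) hPI) hR0
  have hfixed : σ (P.coeff (m.degree R)) = P.coeff (m.degree R) := by
    rcases hle.eq_or_lt with heq | hlt
    · rw [← m.toSyn.injective heq, hmonic.coeff_degree, map_one]
    · rw [m.coeff_eq_zero_of_lt hlt, map_zero]
  refine m.coeff_degree_ne_zero_iff.2 hR0 ?_
  rw [hR, coeff_sub, ← hR, coeff_affineShift_of_degree_le m σ b hle, hfixed, sub_self]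

theorem exists_linear_of_affineShift_eq_self [CharZero K] [Fintype ι] {P : MvPolynomial ι K}
    (hP : P.totalDegree ≠ 0) (hPb : affineShift σ b P = P) :
    ∃ c : ι → K, c ≠ 0 ∧ (∀ i, σ (c i) = c i) ∧ ∃ g, ∑ i, c i * b i = σ g - g := by
  induction hn : P.totalDegree using Nat.strong_induction_on generalizing P with
  | _ n ih =>
  have hpderiv (i : ι) : affineShift σ b (pderiv i P) = pderiv i P := by
    rw [← pderiv_affineShift, hPb]
  by_cases hlin : ∀ i, (pderiv i P).totalDegree = 0
  · obtain ⟨c, hc⟩ : ∃ c : ι → K, ∀ i, pderiv i P = C (c i) :=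
      ⟨_, fun i => totalDegree_eq_zero_iff_eq_C.1 (hlin i)⟩
    have hPlin := eq_sum_C_mul_X_add_C_of_pderiv_eq_C hc
    have hσc (i : ι) : σ (c i) = c i := by
      simpa only [hc, affineShift_C, C_inj] using hpderiv i
    have hconst : ∑ i, c i * b i + σ (constantCoeff P) = constantCoeff P := by
      rw [hPlin] at hPb
      simpa [affineShift_C, affineShift_X, hσc] using congr(constantCoeff $hPb)
    refine ⟨c, fun hc0 => hP ?_, hσc, -constantCoeff P, ?_⟩
    · rw [hPlin, hc0]
      simp
    · rw [map_neg]
      linear_combination hconst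
  · push Not at hlin
    obtain ⟨i, hi⟩ := hlin
    exact ih _ (hn ▸ totalDegree_pderiv_lt hP i) hi (hpderiv i) rfl

theorem exists_linear_of_not_algebraicIndependent [CharZero K] [Fintype ι] {F : Type*}
    [CommRing F] [Nontrivial F] [Algebra K F] {τ : F →+* F}
    (hσ : ∀ c, τ (algebraMap K F c) = algebraMap K F (σ c))
    {y : ι → F} (hy : ∀ i, τ (y i) = y i + algebraMap K F (b i))
    (hdep : ¬ AlgebraicIndependent K y) :
    ∃ c : ι → K, c ≠ 0 ∧ (∀ i, σ (c i) = c i) ∧ ∃ g, ∑ i, c i * b i = σ g - g := by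
  let := LinearOrder.lift' _ (Fintype.equivFin ι).injective
  obtain ⟨P, hPI, hP0, hPb⟩ := exists_affineShift_eq_self (σ := σ) (b := b) MonomialOrder.lex
    (I := RingHom.ker (aeval y : MvPolynomial ι K →ₐ[K] F))
    (mt algebraicIndependent_iff_ker_eq_bot.2 hdep)
    fun P hP => by
      rw [RingHom.mem_ker] at hP ⊢
      rw [aeval_affineShift hσ hy, hP, map_zero]
  refine exists_linear_of_affineShift_eq_self (fun hconst => hP0 ?_) hPb
  have hPC := totalDegree_eq_zero_iff_eq_C.1 hconst
  rw [RingHom.mem_ker, hPC, aeval_C, FaithfulSMul.algebraMap_eq_zero_iff] at hPI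
  rw [hPC, hPI, C_0]

end Field

theorem exists_linear_of_not_algebraicIndependent_subfield {ι F : Type*} [Fintype ι] [Field F]
    [CharZero F] {τ : F →+* F} {K : Subfield F} (hτK : ∀ x ∈ K, τ x ∈ K) {y b : ι → F}
    (hb : ∀ i, b i ∈ K) (hy : ∀ i, τ (y i) = y i + b i) (hdep : ¬ AlgebraicIndependent K y) :
    ∃ c : ι → F, (∃ i, c i ≠ 0) ∧ (∀ i, τ (c i) = c i) ∧
      ∃ g ∈ K, ∑ i, c i * b i = τ g - g := by
  obtain ⟨c, hc0, hc, g, hg⟩ := exists_linear_of_not_algebraicIndependent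
    (σ := τ.restrict K K hτK) (b := fun i => ⟨b i, hb i⟩) (fun _ => rfl) hy hdep
  obtain ⟨i, hi⟩ := Function.ne_iff.1 hc0
  exact ⟨fun i => c i, ⟨i, fun h => hi (Subtype.ext h)⟩, fun i => congr($(hc i).1), g, g.2,
    by simpa using congr($hg.1)⟩

end AffineShift

section Deriv

open Polynomial

variable {K F : Type*} [CommRing K] [CommRing F] [Algebra K F] [Differential F]

theorem deriv_aeval_sub_mem (A : Subring F) {x : F} (hx : x ∈ A)
    (hA' : ∀ c : K, (algebraMap K F c)′ ∈ A) (p : K[X]) :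
    (aeval x p)′ - aeval x (derivative p) * x′ ∈ A := by
  induction p using Polynomial.induction_on' with
  | add p q hp hq =>
    convert A.add_mem hp hq using 1
    simp only [map_add]
    ring
  | monomial n c =>
    convert A.mul_mem (A.pow_mem hx n) (hA' c) using 1
    simp only [aeval_monomial, derivative_monomial, Derivation.leibniz, Derivation.leibniz_pow,
      map_mul, map_natCast, smul_eq_mul, nsmul_eq_mul]
    ring

theorem deriv_mem_of_isAlgebraic {K F : Type*} [Field K] [CharZero K] [Field F] [Algebra K F]
    [Differential F] (A : Subfield F) {x : F} (hx : x ∈ A)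
    (hA : ∀ c : K, algebraMap K F c ∈ A) (hA' : ∀ c : K, (algebraMap K F c)′ ∈ A)
    (halg : IsAlgebraic K x) : x′ ∈ A := by
  have hsep : aeval x (derivative (minpoly K x)) ≠ 0 :=
    (minpoly.irreducible halg.isIntegral).separable.aeval_derivative_ne_zero (minpoly.aeval K x)
  have hmem : aeval x (derivative (minpoly K x)) ∈ A := by
    rw [aeval_eq_sum_range]
    refine A.sum_mem fun i _ => ?_
    rw [Algebra.smul_def]
    exact A.mul_mem (hA _) (pow_mem hx i)
  have hprod : aeval x (derivative (minpoly K x)) * x′ ∈ A := by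
    have := deriv_aeval_sub_mem A.toSubring hx hA' (minpoly K x)
    rw [minpoly.aeval, map_zero, zero_sub] at this
    exact neg_mem_iff.1 this
  exact mul_div_cancel_left₀ x′ hsep ▸ A.div_mem hprod hmem

variable [Differential K] [DifferentialAlgebra K F]

theorem deriv_mem_of_mem_span {s : Set F} {W : Submodule K F} (hs : s ⊆ W)
    (hs' : ∀ x ∈ s, x′ ∈ W) {x : F} (hx : x ∈ Submodule.span K s) : x′ ∈ W := by
  induction hx using Submodule.span_induction with
  | mem x hx => exact hs' x hx
  | zero => simp
  | add x y _ _ hx hy => exact Differential.deriv.map_add x y ▸ W.add_mem hx hy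
  | smul c x hxs hx =>
    have h : (c • x)′ = c • x′ + c′ • x := by
      rw [Algebra.smul_def, Derivation.leibniz, deriv_algebraMap, smul_eq_mul, smul_eq_mul,
        mul_comm x, ← Algebra.smul_def, ← Algebra.smul_def]
    exact h ▸ W.add_mem (W.smul_mem _ hx) (W.smul_mem _ (Submodule.span_le.2 hs hxs))

theorem deriv_mem_of_mem_adjoin {K F : Type*} [Field K] [Field F] [Algebra K F]
    [Differential K] [Differential F] [DifferentialAlgebra K F] {s : Set F}
    {E : IntermediateField K F} (hs : s ⊆ E) (hs' : ∀ x ∈ s, x′ ∈ E) {x : F}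
    (hx : x ∈ IntermediateField.adjoin K s) : x′ ∈ E := by
  have hle : IntermediateField.adjoin K s ≤ E := IntermediateField.adjoin_le_iff.2 hs
  induction hx using IntermediateField.adjoin_induction with
  | mem x hx => exact hs' x hx
  | algebraMap c => exact deriv_algebraMap (B := F) c ▸ E.algebraMap_mem _
  | add x y _ _ hx hy => exact Differential.deriv.map_add x y ▸ E.add_mem hx hy
  | mul x y hxs hys hx hy =>
    rw [Derivation.leibniz]
    exact E.add_mem (E.mul_mem (hle hxs) hy) (E.mul_mem (hle hys) hx)
  | inv x hxs hx =>
    rw [Derivation.leibniz_inv]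
    exact E.mul_mem (E.neg_mem (pow_mem (E.inv_mem (hle hxs)) 2)) hx

end Deriv

section Definitions

variable (K : Type*) {F : Type*} [CommRing K] [CommRing F] [Algebra K F] [Differential F]

/-- `y` satisfies a nonzero homogeneous linear differential equation with coefficients in `K`,
i.e. finitely many of its iterated derivatives are linearly dependent over `K`. -/
def IsDFinite (y : F) : Prop :=
  ∃ n, ¬ LinearIndependent K (fun i : Fin (n + 1) => (⇑Differential.deriv)^[(i : ℕ)] y)

/-- `z` satisfies a nonzero polynomial differential equation with coefficients in `K`, i.e. finitely
many of its iterated derivatives are algebraically dependent over `K`. -/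
def IsDifferentiallyAlgebraic (z : F) : Prop :=
  ∃ n, ¬ AlgebraicIndependent K (fun i : Fin (n + 1) => (⇑Differential.deriv)^[(i : ℕ)] z)

variable {K}

theorem IsDFinite.isDifferentiallyAlgebraic {y : F} (hy : IsDFinite K y) :
    IsDifferentiallyAlgebraic K y :=
  hy.imp fun _ => mt AlgebraicIndependent.linearIndependent

end Definitions

section DFinite

variable {K F : Type*} [Field K] [CommRing F] [Algebra K F]

theorem exists_mem_span_image_Iio {K V : Type*} [DivisionRing K] [AddCommGroup V] [Module K V]
    (W : Submodule K V) (u : ℕ → V) {n : ℕ} {c : Fin n → K} (hc : c ≠ 0)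
    (hsum : ∑ i, c i • u i ∈ W) :
    ∃ m, u m ∈ Submodule.span K (W ∪ u '' Set.Iio m) := by
  induction n with
  | zero => exact absurd (Subsingleton.elim _ _) hc
  | succ n ih =>
    rw [Fin.sum_univ_castSucc] at hsum
    by_cases hlast : c (Fin.last n) = 0
    · refine ih (c := fun i => c i.castSucc) (fun h => hc ?_) (by simpa [hlast] using hsum)
      funext i
      induction i using Fin.lastCases with
      | last => exact hlast
      | cast i => exact congrFun h i
    · refine ⟨n, ?_⟩
      set S := Submodule.span K (W ∪ u '' Set.Iio n)
      have hlow : ∑ i : Fin n, c i.castSucc • u i ∈ S :=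
        S.sum_mem fun i _ => S.smul_mem _ (Submodule.subset_span (.inr ⟨i, i.2, rfl⟩))
      have htop := (S.add_mem_iff_right hlow).1 (Submodule.subset_span (.inl hsum))
      exact (S.smul_mem_iff hlast).1 htop

variable [Differential F]

theorem isDFinite_of_mem_of_finiteDimensional {W : Submodule K F} [FiniteDimensional K W]
    (hW : ∀ x ∈ W, x′ ∈ W) {y : F} (hy : y ∈ W) : IsDFinite K y := by
  have hmem (i : ℕ) : (⇑Differential.deriv)^[i] y ∈ W :=
    Set.MapsTo.iterate (s := (W : Set F)) hW i hy
  refine ⟨Module.finrank K W, fun hli => ?_⟩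
  have hli' : LinearIndependent K fun i : Fin (Module.finrank K W + 1) =>
    (⟨(⇑Differential.deriv)^[(i : ℕ)] y, hmem i⟩ : W) := .of_comp W.subtype hli
  simpa using hli'.fintype_card_le_finrank

variable [Differential K] [DifferentialAlgebra K F]

theorem isDFinite_of_sum_smul_mem {W : Submodule K F} [FiniteDimensional K W]
    (hW : ∀ x ∈ W, x′ ∈ W) {y : F} {n : ℕ} {c : Fin n → K} (hc : c ≠ 0)
    (hsum : ∑ i : Fin n, c i • (⇑Differential.deriv)^[(i : ℕ)] y ∈ W) : IsDFinite K y := by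
  obtain ⟨m, hm⟩ := exists_mem_span_image_Iio W (fun i => (⇑Differential.deriv)^[i] y) hc hsum
  set u : ℕ → F := fun i => (⇑Differential.deriv)^[i] y with hu
  set S := Submodule.span K (W ∪ u '' Set.Iio m) with hS
  have : FiniteDimensional K S := by
    rw [hS, Submodule.span_union, Submodule.span_eq]
    have := FiniteDimensional.span_of_finite K ((Set.finite_Iio m).image u)
    infer_instance
  have hstable (x : F) (hx : x ∈ S) : x′ ∈ S := by
    refine deriv_mem_of_mem_span Submodule.subset_span ?_ hx
    rintro x (hx | ⟨i, hi, rfl⟩)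
    · exact Submodule.subset_span (.inl (hW x hx))
    · rw [hu, ← Function.iterate_succ_apply' Differential.deriv]
      rcases (Nat.succ_le_of_lt hi).eq_or_lt with heq | hlt
      · rwa [← heq] at hm
      · exact Submodule.subset_span (.inr ⟨i + 1, hlt, rfl⟩)
  refine isDFinite_of_mem_of_finiteDimensional hstable ?_
  rcases m.eq_zero_or_pos with rfl | hpos
  · exact hm
  · exact Submodule.subset_span (.inr ⟨0, hpos, rfl⟩)

theorem isDFinite_of_sum_smul_mem_one {y : F} {n : ℕ} {c : Fin n → K} (hc : c ≠ 0)
    (hsum : ∑ i : Fin n, c i • (⇑Differential.deriv)^[(i : ℕ)] y ∈ (1 : Submodule K F)) :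
    IsDFinite K y := by
  have : FiniteDimensional K (1 : Submodule K F) := by
    rw [Submodule.one_eq_span]
    infer_instance
  refine isDFinite_of_sum_smul_mem (fun x hx => ?_) hc hsum
  obtain ⟨c, rfl⟩ := Submodule.mem_one.1 hx
  exact Submodule.mem_one.2 ⟨c′, (deriv_algebraMap c).symm⟩

end DFinite

section DifferentiallyAlgebraic

open scoped IntermediateField.algebraAdjoinAdjoin

theorem exists_isAlgebraic_adjoin_image_Iio {K F : Type*} [CommRing K] [CommRing F]
    [Algebra K F] [FaithfulSMul K F] (x : ℕ → F) {n : ℕ}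
    (hdep : ¬ AlgebraicIndependent K fun i : Fin n => x i) :
    ∃ m, IsAlgebraic (Algebra.adjoin K (x '' Set.Iio m)) (x m) := by
  by_contra! htrans
  have hind (m : ℕ) : AlgebraicIndepOn K x (Set.Iio m) := by
    induction m with
    | zero =>
      have : IsEmpty (Set.Iio 0) := by simp
      exact algebraicIndependent_empty_type_iff.2 (FaithfulSMul.algebraMap_injective K F)
    | succ m ih =>
      rw [← Order.succ_eq_add_one, Order.Iio_succ_eq_insert]
      exact ih.insert (htrans m)
  exact hdep ((hind n).comp (fun i : Fin n => ⟨i, i.2⟩) fun i j h => Fin.ext congr($h.1))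

variable {K F : Type*} [Field K] [Field F] [Algebra K F] [Differential F]

theorem isDifferentiallyAlgebraic_of_mem {E : IntermediateField K F} (hfg : E.FG)
    (hE : ∀ x ∈ E, x′ ∈ E) {z : F} (hz : z ∈ E) : IsDifferentiallyAlgebraic K z := by
  have hmem (i : ℕ) : (⇑Differential.deriv)^[i] z ∈ E :=
    Set.MapsTo.iterate (s := (E : Set F)) hE i hz
  have := IntermediateField.essFiniteType_iff.2 hfg
  obtain ⟨n, hn⟩ := Cardinal.lt_aleph0.1 (trdeg_lt_aleph0 K E)
  refine ⟨n, fun hind => ?_⟩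
  have hind' : AlgebraicIndependent K fun i : Fin (n + 1) =>
    (⟨(⇑Differential.deriv)^[(i : ℕ)] z, hmem i⟩ : E) := .of_comp E.val hind
  have hle := hind'.lift_cardinalMk_le_trdeg
  rw [hn] at hle
  simp at hle

variable [CharZero K] [Differential K] [DifferentialAlgebra K F]

theorem IsDifferentiallyAlgebraic.exists_mem_fg {z : F}
    (hz : IsDifferentiallyAlgebraic K z) :
    ∃ E : IntermediateField K F, E.FG ∧ (∀ x ∈ E, x′ ∈ E) ∧ z ∈ E := by
  obtain ⟨n, hn⟩ := hz
  obtain ⟨m, hm⟩ := exists_isAlgebraic_adjoin_image_Iio (fun i => (⇑Differential.deriv)^[i] z) hn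
  set u : ℕ → F := fun i => (⇑Differential.deriv)^[i] z with hu
  set L := IntermediateField.adjoin K (u '' Set.Iio m)
  set E := IntermediateField.adjoin K (u '' Set.Iic m)
  have huE {i : ℕ} (hi : i ≤ m) : u i ∈ E := IntermediateField.subset_adjoin _ _ ⟨i, hi, rfl⟩
  have hsub : u '' Set.Iio m ⊆ E := Set.image_subset_iff.2 fun i hi => huE (le_of_lt hi)
  have hLE : L ≤ E := IntermediateField.adjoin_le_iff.2 hsub
  have hlow (i : ℕ) (hi : i < m) : (u i)′ ∈ E := by
    rw [hu, ← Function.iterate_succ_apply' Differential.deriv]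
    exact huE hi
  have hL' (c : L) : (c : F)′ ∈ E :=
    deriv_mem_of_mem_adjoin hsub (Set.forall_mem_image.2 hlow) c.2
  have htop : (u m)′ ∈ E :=
    deriv_mem_of_isAlgebraic (K := L) E.toSubfield (huE le_rfl) (fun c => hLE c.2) hL'
      (hm.extendScalars (FaithfulSMul.algebraMap_injective _ L))
  refine ⟨E, IntermediateField.fg_adjoin_of_finite ((Set.finite_Iic m).image u), fun x hx => ?_,
    huE m.zero_le⟩
  refine deriv_mem_of_mem_adjoin (IntermediateField.subset_adjoin _ _)
    (Set.forall_mem_image.2 fun i hi => ?_) hx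
  rcases (Set.mem_Iic.1 hi).lt_or_eq with hlt | rfl
  · exact hlow i hlt
  · exact htop

theorem isDifferentiallyAlgebraic_iff_exists_mem_fg {z : F} :
    IsDifferentiallyAlgebraic K z ↔
      ∃ E : IntermediateField K F, E.FG ∧ (∀ x ∈ E, x′ ∈ E) ∧ z ∈ E :=
  ⟨fun hz => hz.exists_mem_fg, fun ⟨_, hfg, hE, hz⟩ => isDifferentiallyAlgebraic_of_mem hfg hE hz⟩

theorem isDifferentiallyAlgebraic_logDeriv_iff {z : F} (hz : z ≠ 0) :
    IsDifferentiallyAlgebraic K (Differential.logDeriv z) ↔ IsDifferentiallyAlgebraic K z := by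
  simp only [isDifferentiallyAlgebraic_iff_exists_mem_fg]
  refine ⟨fun ⟨E, hfg, hE, hy⟩ => ?_, fun ⟨E, hfg, hE, hzE⟩ =>
    ⟨E, hfg, hE, E.div_mem (hE z hzE) hzE⟩⟩
  set E' := E ⊔ IntermediateField.adjoin K {z} with hE'
  have hsup : E' = IntermediateField.adjoin K (E ∪ {z}) := by
    rw [hE', IntermediateField.adjoin_union, IntermediateField.adjoin_self]
  have hzE' : z ∈ E' := le_sup_right (a := E) (IntermediateField.mem_adjoin_simple_self K z)
  have hEE' : E ≤ E' := le_sup_left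
  have hfg' : E'.FG :=
    IntermediateField.fg_sup hfg (IntermediateField.fg_adjoin_of_finite (Set.finite_singleton z))
  refine ⟨E', hfg', fun x hx => ?_, hzE'⟩
  refine deriv_mem_of_mem_adjoin (s := E ∪ {z}) (hsup ▸ IntermediateField.subset_adjoin _ _) ?_
    (hsup ▸ hx)
  rintro x (hxE | rfl)
  · exact hEE' (hE x hxE)
  · rw [← div_mul_cancel₀ x′ hz]
    exact E'.mul_mem (hEE' hy) hzE'

end DifferentiallyAlgebraic

section Difference

theorem mem_iff_exists_map_sub_self_eq {A : Type*} [AddCommGroup A] {τ : A →+ A}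
    {K : AddSubgroup A} (hfix : ∀ x, τ x = x → x ∈ K) {w : A} :
    w ∈ K ↔ ∃ g ∈ K, τ w - w = τ g - g := by
  refine ⟨fun hw => ⟨w, hw, rfl⟩, fun ⟨g, hg, heq⟩ => ?_⟩
  have hfixed : τ (w - g) = w - g := by
    rw [map_sub, sub_eq_sub_iff_sub_eq_sub, heq]
  exact sub_add_cancel w g ▸ K.add_mem (hfix _ hfixed) hg

theorem sum_mul_mem_iff_exists_eq_map_sub_self {ι A : Type*} [Fintype ι] [CommRing A]
    {τ : A →+* A} {K : AddSubgroup A} (hfix : ∀ x, τ x = x → x ∈ K) {c y b : ι → A}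
    (hc : ∀ i, τ (c i) = c i) (hy : ∀ i, τ (y i) = y i + b i) :
    ∑ i, c i * y i ∈ K ↔ ∃ g ∈ K, ∑ i, c i * b i = τ g - g := by
  have hsub : τ (∑ i, c i * y i) - ∑ i, c i * y i = ∑ i, c i * b i := by
    simp only [map_sum, map_mul, hc, hy, mul_add, Finset.sum_add_distrib, add_sub_cancel_left]
  rw [← hsub]
  exact mem_iff_exists_map_sub_self_eq (τ := (τ : A →+ A)) hfix

theorem map_iterate_deriv_logDeriv {F : Type*} [Field F] [Differential F] {τ : F →+* F}
    (hτ : ∀ x, (τ x)′ = τ x′) {a z : F} (ha : a ≠ 0) (hz0 : z ≠ 0) (hz : τ z = a * z) (i : ℕ) :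
    τ ((⇑Differential.deriv)^[i] (Differential.logDeriv z)) =
      (⇑Differential.deriv)^[i] (Differential.logDeriv z) +
        (⇑Differential.deriv)^[i] (Differential.logDeriv a) := by
  have hlog : τ (Differential.logDeriv z) = Differential.logDeriv z + Differential.logDeriv a := by
    rw [add_comm, ← Differential.logDeriv_mul a z ha hz0, ← hz, Differential.logDeriv,
      Differential.logDeriv, map_div₀, hτ]
  have hcomm : Function.Commute τ Differential.deriv := fun x => (hτ x).symm
  rw [hcomm.iterate_right i, hlog, iterate_map_add]

end Difference

section Subfield

/-- The differential ring structure given by an additive map satisfying the Leibniz rule. -/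
abbrev differentialOfLeibniz {A : Type*} [CommRing A] (del : A → A)
    (hadd : ∀ x y, del (x + y) = del x + del y)
    (hmul : ∀ x y, del (x * y) = x * del y + del x * y) : Differential A where
  deriv := Derivation.mk' (AddMonoidHom.mk' del hadd).toIntLinearMap fun x y => by
    simp [hmul, mul_comm]

variable {F : Type*} [Field F] [Differential F]

/-- The restriction of the derivation of `F` to a stable subfield. It is not an instance because it
depends on the proof of stability. -/
abbrev differentialRestrict (K : Subfield F) (hK : ∀ x ∈ K, x′ ∈ K) : Differential K :=
  differentialOfLeibniz (fun x => ⟨(x : F)′, hK x x.2⟩) (fun x y => Subtype.ext (map_add _ _ _))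
    fun x y => Subtype.ext <| by simp [Derivation.leibniz, mul_comm]

theorem differentialAlgebra_differentialRestrict (K : Subfield F) (hK : ∀ x ∈ K, x′ ∈ K) :
    letI := differentialRestrict K hK
    DifferentialAlgebra K F :=
  letI := differentialRestrict K hK
  ⟨fun _ => rfl⟩

theorem isDFinite_iff_exists_sum_eq_zero {K : Subfield F} {y : F} :
    IsDFinite K y ↔ ∃ n : ℕ, ∃ b : Fin (n + 1) → F, (∀ i, b i ∈ K) ∧ (∃ i, b i ≠ 0) ∧
      ∑ i : Fin (n + 1), b i * (⇑Differential.deriv)^[(i : ℕ)] y = 0 := by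
  refine exists_congr fun n => ?_
  rw [Fintype.not_linearIndependent_iff]
  constructor
  · rintro ⟨c, hsum, i, hi⟩
    exact ⟨fun i => c i, fun i => (c i).2, ⟨i, fun h => hi (Subtype.ext h)⟩, hsum⟩
  · rintro ⟨b, hb, ⟨i, hi⟩, hsum⟩
    exact ⟨fun i => ⟨b i, hb i⟩, hsum, i, fun h => hi congr($h.1)⟩

end Subfield

/-- Characterization of differential algebraicity over `K` of a nonzero solution `z ∈ F` of
the homogeneous difference equation `τ(z) = a z` with `a ∈ K*`, in the presence of a
derivation `∂` commuting with `τ`. -/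
theorem differential_algebraicity_homogeneous
    (F : Type*) [Field F] [CharZero F] (τ : F →+* F)
    (k : Subfield F) (hk : ∀ x : F, x ∈ k ↔ τ x = x)
    (K : Subfield F) (hkK : (k : Set F) ⊆ (K : Set F)) (hτK : ∀ x ∈ K, τ x ∈ K)
    (del : F → F)
    (hdeladd : ∀ x y : F, del (x + y) = del x + del y)
    (hdelmul : ∀ x y : F, del (x * y) = x * del y + del x * y)
    (hdelτ : ∀ x : F, del (τ x) = τ (del x))
    (hdelK : ∀ x ∈ K, del x ∈ K)
    (a : F) (haK : a ∈ K) (ha0 : a ≠ 0)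
    (z : F) (hz0 : z ≠ 0) (hz : τ z = a * z) :
    List.TFAE
      [ ∃ n : ℕ, ∃ lam : Fin (n + 1) → F, (∀ i, lam i ∈ k) ∧ (∃ i, lam i ≠ 0) ∧
          ∃ g ∈ K, ∑ i : Fin (n + 1), lam i * del^[(i : ℕ)] (del a / a) = τ g - g,
        ∃ n : ℕ, ∃ lam : Fin (n + 1) → F, (∀ i, lam i ∈ k) ∧ (∃ i, lam i ≠ 0) ∧
          (∑ i : Fin (n + 1), lam i * del^[(i : ℕ)] (del z / z)) ∈ K,
        ∃ n : ℕ, ∃ b : Fin (n + 1) → F, (∀ i, b i ∈ K) ∧ (∃ i, b i ≠ 0) ∧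
          ∑ i : Fin (n + 1), b i * del^[(i : ℕ)] (del z / z) = 0,
        ∃ n : ℕ, ¬ AlgebraicIndependent K (fun i : Fin (n + 1) => del^[(i : ℕ)] z) ] := by
  let _ : Differential F := differentialOfLeibniz del hdeladd hdelmul
  let _ : Differential K := differentialRestrict K hdelK
  have : DifferentialAlgebra K F := differentialAlgebra_differentialRestrict K hdelK
  have hy (i : ℕ) : τ (del^[i] (del z / z)) = del^[i] (del z / z) + del^[i] (del a / a) :=
    map_iterate_deriv_logDeriv hdelτ ha0 hz0 hz i
  have hbK (i : ℕ) : del^[i] (del a / a) ∈ K :=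
    Set.MapsTo.iterate (s := (K : Set F)) hdelK i (K.div_mem (hdelK a haK) haK)
  tfae_have 1 ↔ 2 := by
    refine exists_congr fun n => exists_congr fun lam => and_congr_right fun hlam =>
      and_congr_right fun _ => ?_
    exact (sum_mul_mem_iff_exists_eq_map_sub_self (K := K.toAddSubgroup)
      (fun x hx => hkK ((hk x).2 hx)) (fun i => (hk _).1 (hlam i)) fun i => hy i).symm
  tfae_have 2 → 3 := fun ⟨n, lam, hlam, ⟨i, hi⟩, hmem⟩ =>
    isDFinite_iff_exists_sum_eq_zero.1 <| isDFinite_of_sum_smul_mem_one (K := K)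
      (c := fun i => ⟨lam i, hkK (hlam i)⟩) (fun h => hi congr($(congrFun h i).1))
      (Submodule.mem_one.2 ⟨⟨_, hmem⟩, rfl⟩)
  tfae_have 3 → 4 := fun h => (isDifferentiallyAlgebraic_logDeriv_iff hz0).1
    (isDFinite_iff_exists_sum_eq_zero.2 h).isDifferentiallyAlgebraic
  tfae_have 4 → 1 := fun h => by
    obtain ⟨n, hn⟩ := (isDifferentiallyAlgebraic_logDeriv_iff (K := K) hz0).2 h
    obtain ⟨c, hc0, hc, hg⟩ := exists_linear_of_not_algebraicIndependent_subfield hτK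
      (fun i : Fin (n + 1) => hbK i) (fun i => hy i) hn
    exact ⟨n, c, fun i => (hk _).2 (hc i), hc0, hg⟩
  tfae_finish
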